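/- arXiv:1309.3989 — 7 statements merged into one kernel-verified Lean document; each statement's English description precedes it below -/
import Mathlib

section
/- Let d ≥ 2, let K be a convex body in ℝ^d and let D = diam(K) be its diameter. Then for every ε with 0 < ε ≤ D and every point y ∈ ℝ^d with dist(y, K) = ε, the Lebesgue volumes satisfy V_d(K^y) − V_d(K) ≥ (ε/(2D))^d · V_d(K). -/
open MeasureTheory Metric Set

/-!
Shrink `K` towards `y` by the factor `ε / (2 D)`. Points of `K` lie within `ε + D ≤ 2 D` of `y`, so
the shrunken copy lies in the closed ball of radius `ε` around `y`, which meets `K` only in a subset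
of its boundary sphere, a null set. Hence `conv (K ∪ {y})` contains `K` and the copy, and these are
disjoint up to a null set; the copy has volume `(ε / (2 D)) ^ d * V_d K`.
-/

theorem image_homothety_subset_closedBall {𝕜 V P : Type*} [NormedField 𝕜]
    [SeminormedAddCommGroup V] [NormedSpace 𝕜 V] [PseudoMetricSpace P] [NormedAddTorsor V P]
    {s : Set P} {y : P} {R : ℝ} (hs : s ⊆ closedBall y R) (r : 𝕜) :
    AffineMap.homothety y r '' s ⊆ closedBall y (‖r‖ * R) := by
  rintro _ ⟨x, hx, rfl⟩
  rw [mem_closedBall, dist_homothety_center]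
  gcongr
  exact mem_closedBall'.1 (hs hx)

theorem image_homothety_subset_convexHull_union_singleton {𝕜 E : Type*} [CommRing 𝕜]
    [PartialOrder 𝕜] [AddRightMono 𝕜] [AddCommGroup E] [Module 𝕜 E] (s : Set E) (y : E) {r : 𝕜}
    (hr : r ∈ Icc 0 1) :
    AffineMap.homothety y r '' s ⊆ convexHull 𝕜 (s ∪ {y}) := by
  rintro _ ⟨x, hx, rfl⟩
  rw [AffineMap.homothety_eq_lineMap]
  have hy : y ∈ convexHull 𝕜 (s ∪ {y}) := subset_convexHull 𝕜 _ (mem_union_right s rfl)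
  have hx : x ∈ convexHull 𝕜 (s ∪ {y}) := subset_convexHull 𝕜 _ (mem_union_left _ hx)
  exact (convex_convexHull 𝕜 _).lineMap_mem hy hx hr

section AddHaar

variable {E : Type*} [NormedAddCommGroup E] [NormedSpace ℝ E] [FiniteDimensional ℝ E]
  [MeasurableSpace E] [BorelSpace E] (μ : Measure E) [μ.IsAddHaarMeasure] {s : Set E} {y : E}

theorem addHaar_sdiff_closedBall_infDist (hy : infDist y s ≠ 0) :
    μ (s \ closedBall y (infDist y s)) = μ s := by
  have hsub : s ∩ closedBall y (infDist y s) ⊆ sphere y (infDist y s) := by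
    rintro x ⟨hxs, hxy⟩
    exact le_antisymm hxy (dist_comm x y ▸ infDist_le_dist_of_mem hxs)
  exact measure_sdiff_null' (measure_mono_null hsub (Measure.addHaar_sphere_of_ne_zero μ y hy))

theorem addHaar_add_addHaar_image_homothety_le (hy : infDist y s ≠ 0) {r : ℝ} (hr : r ∈ Icc 0 1)
    (hball : AffineMap.homothety y r '' s ⊆ closedBall y (infDist y s)) :
    μ s + μ (AffineMap.homothety y r '' s) ≤ μ (convexHull ℝ (s ∪ {y})) := by
  set B := closedBall y (infDist y s)
  set H := convexHull ℝ (s ∪ {y})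
  have hsH : s ⊆ H := subset_union_left.trans (subset_convexHull ℝ _)
  calc μ s + μ (AffineMap.homothety y r '' s)
      = μ (s \ B) + μ (AffineMap.homothety y r '' s) := by
        rw [addHaar_sdiff_closedBall_infDist μ hy]
    _ ≤ μ (H \ B) + μ (H ∩ B) := by
        gcongr
        exact subset_inter (image_homothety_subset_convexHull_union_singleton s y hr) hball
    _ = μ H := by rw [add_comm, measure_inter_add_sdiff H measurableSet_closedBall]

theorem pow_mul_addHaar_real_le_convexHull_sub (hs : Bornology.IsBounded s) (hy : infDist y s ≠ 0)
    {r : ℝ} (hr : r ∈ Icc 0 1)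
    (hball : AffineMap.homothety y r '' s ⊆ closedBall y (infDist y s)) :
    r ^ Module.finrank ℝ E * μ.real s ≤ μ.real (convexHull ℝ (s ∪ {y})) - μ.real s := by
  have hvol : μ.real (AffineMap.homothety y r '' s) = r ^ Module.finrank ℝ E * μ.real s := by
    rw [measureReal_def, Measure.addHaar_image_homothety, ENNReal.toReal_mul,
      ENNReal.toReal_ofReal (abs_nonneg _), abs_of_nonneg (pow_nonneg hr.1 _), measureReal_def]
  have hHfin : μ (convexHull ℝ (s ∪ {y})) ≠ ⊤ :=
    (isBounded_convexHull.2 (hs.union Bornology.isBounded_singleton)).measure_lt_top.ne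
  have hle := addHaar_add_addHaar_image_homothety_le μ hy hr hball
  have hfin := ENNReal.add_ne_top.1 (ne_top_of_le_ne_top hHfin hle)
  rw [le_sub_iff_add_le', ← hvol, measureReal_def, measureReal_def,
    ← ENNReal.toReal_add hfin.1 hfin.2]
  exact ENNReal.toReal_mono hHfin hle

theorem statement1_general {K : Set E} (hK : Bornology.IsBounded K) {ε : ℝ} (hε : 0 < ε)
    (hεD : ε ≤ diam K) (hy : infDist y K = ε) :
    (ε / (2 * diam K)) ^ Module.finrank ℝ E * μ.real K ≤
      μ.real (convexHull ℝ (K ∪ {y})) - μ.real K := by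
  subst hy
  have hD : 0 < diam K := hε.trans_le hεD
  set r := infDist y K / (2 * diam K) with hr_def
  have hr : r ∈ Icc 0 1 := ⟨by positivity, (div_le_one (by positivity)).2 (by linarith)⟩
  have hKball : K ⊆ closedBall y (2 * diam K) := fun x hx ↦ mem_closedBall'.2 <| by
    linarith [dist_le_infDist_add_diam (x := y) hK hx]
  have hrad : ‖r‖ * (2 * diam K) = infDist y K := by
    rw [Real.norm_of_nonneg hr.1, hr_def, div_mul_cancel₀ _ (by positivity)]
  exact pow_mul_addHaar_real_le_convexHull_sub μ hK hε.ne' hr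
    (hrad ▸ image_homothety_subset_closedBall hKball r)

end AddHaar

theorem statement1 {d : ℕ} (hd : 2 ≤ d) (K : Set (EuclideanSpace ℝ (Fin d)))
    (hKcomp : IsCompact K) (hKconv : Convex ℝ K) (hKint : (interior K).Nonempty)
    (ε : ℝ) (hε : 0 < ε) (hεD : ε ≤ diam K)
    (y : EuclideanSpace ℝ (Fin d)) (hy : infDist y K = ε) :
    (ε / (2 * diam K)) ^ d * (volume K).toReal ≤
      (volume (convexHull ℝ (K ∪ {y}))).toReal - (volume K).toReal := by
  simpa only [measureReal_def, finrank_euclideanSpace_fin] using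
    statement1_general volume hKcomp.isBounded hε hεD hy
end

section
/- Let d ≥ 2 and let K be a convex body in ℝ^d such that a ball of radius r > 0 slides freely inside K. Then there exists a constant c > 0 (depending on K, d) such that for every ε with 0 < ε ≤ 1 and every point y ∈ ℝ^d with dist(y, K) = ε, the Lebesgue volumes satisfy V_d(K^y) − V_d(K) ≥ c·ε^{(d+1)/2}. -/
open MeasureTheory Metric Set

/-!
Let `x` be the point of `K` nearest to `y = x + ε u`. The hyperplane through `x` orthogonal to `u`
supports `K`, so the ball of radius `r` inside `K` through `x` is tangent to it. A ball bends away
from a tangent hyperplane only quadratically, so the map that scales by `ε` along `u` and by `√ε`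
across `u` carries a fixed cone, with apex `u` and base a disc slightly below the hyperplane, to a
cone with apex `y` whose base still lies in the ball. The part of this cone above the hyperplane is
disjoint from `K`, lies in the convex hull of `K ∪ {y}`, and contains the image of a fixed ball,
whose volume is a constant times `ε * √ε ^ (d - 1)`.
-/

/-- A ball of radius `r` slides freely inside `K`: every point of `K` belongs to a closed ball of
radius `r` contained in `K`. -/
def BallSlidesFreely {X : Type*} [PseudoMetricSpace X] (r : ℝ) (K : Set X) : Prop :=
  ∀ x ∈ K, ∃ z, x ∈ closedBall z r ∧ closedBall z r ⊆ K

section InnerProductSpace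

variable {E : Type*} [NormedAddCommGroup E] [InnerProductSpace ℝ E] {u : E}

theorem norm_add_smul_sq_of_inner_eq_zero (hu : ‖u‖ = 1) {v : E} (huv : inner ℝ u v = 0) (c : ℝ) :
    ‖v + c • u‖ ^ 2 = ‖v‖ ^ 2 + c ^ 2 := by
  rw [norm_add_sq_real, real_inner_smul_right, real_inner_comm, huv, norm_smul, hu, mul_one,
    Real.norm_eq_abs, sq_abs]
  ring

theorem inner_sub_inner_smul_self_eq_zero (hu : ‖u‖ = 1) (g : E) :
    inner ℝ u (g - inner ℝ u g • u) = 0 := by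
  rw [inner_sub_right, real_inner_smul_right, real_inner_self_eq_norm_sq, hu, one_pow, mul_one,
    sub_self]

theorem norm_sub_inner_smul_le (hu : ‖u‖ = 1) (g : E) : ‖g - inner ℝ u g • u‖ ≤ ‖g‖ := by
  have hpyth := norm_add_smul_sq_of_inner_eq_zero hu (inner_sub_inner_smul_self_eq_zero hu g)
    (inner ℝ u g)
  rw [sub_add_cancel] at hpyth
  exact le_of_sq_le_sq (by linarith [sq_nonneg (inner ℝ u g)]) (norm_nonneg g)

theorem inner_pos_of_mem_ball_smul (hu : ‖u‖ = 1) {c : ℝ} {g : E} (hg : g ∈ ball (c • u) c) :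
    0 < inner ℝ u g := by
  have hinner : inner ℝ u (g - c • u) = inner ℝ u g - c := by
    rw [inner_sub_right, real_inner_smul_right, real_inner_self_eq_norm_sq, hu, one_pow, mul_one]
  have habs : |inner ℝ u (g - c • u)| ≤ ‖g - c • u‖ := by
    simpa only [hu, one_mul] using abs_real_inner_le_norm u (g - c • u)
  rw [mem_ball_iff_norm] at hg
  linarith [neg_le_of_abs_le habs]

/-- The linear map that, for a unit vector `u`, scales by `q ^ 2` along `u` and by `q` on the
orthogonal complement of `u`. It is encoded as a multiple of a transvection, whose determinant is
known. -/
noncomputable def parabolicScaling (u : E) (q : ℝ) : E →ₗ[ℝ] E :=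
  q • LinearMap.transvection (innerₛₗ ℝ u) ((q - 1) • u)

theorem parabolicScaling_apply (u : E) (q : ℝ) (g : E) :
    parabolicScaling u q g = q • (g + inner ℝ u g • (q - 1) • u) := by
  simp only [parabolicScaling, LinearMap.smul_apply, LinearMap.transvection.apply,
    innerₛₗ_apply_apply]

theorem parabolicScaling_of_inner_eq_zero {v : E} (huv : inner ℝ u v = 0) (q : ℝ) :
    parabolicScaling u q v = q • v := by
  rw [parabolicScaling_apply, huv, zero_smul, add_zero]

theorem parabolicScaling_self (hu : ‖u‖ = 1) (q : ℝ) : parabolicScaling u q u = q ^ 2 • u := by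
  rw [parabolicScaling_apply, real_inner_self_eq_norm_sq, hu]
  module

theorem inner_parabolicScaling (hu : ‖u‖ = 1) (q : ℝ) (g : E) :
    inner ℝ u (parabolicScaling u q g) = q ^ 2 * inner ℝ u g := by
  simp only [parabolicScaling_apply, real_inner_smul_right, inner_add_right,
    real_inner_self_eq_norm_sq, hu]
  ring

theorem det_parabolicScaling (hu : ‖u‖ = 1) [FiniteDimensional ℝ E] (q : ℝ) :
    LinearMap.det (parabolicScaling u q) = q ^ (Module.finrank ℝ E + 1) := by
  rw [parabolicScaling, LinearMap.det_smul, LinearMap.transvection.det, innerₛₗ_apply_apply,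
    real_inner_smul_right, real_inner_self_eq_norm_sq, hu]
  ring

theorem add_parabolicScaling_mem_closedBall (hu : ‖u‖ = 1) {v : E} (huv : inner ℝ u v = 0)
    {α q r : ℝ} (hv : ‖v‖ ≤ α) (hαr : α * (1 + q ^ 2) ≤ 2 * r) (x : E) :
    x + parabolicScaling u q (v - α • u) ∈ closedBall (x - r • u) r := by
  have hα : 0 ≤ α := (norm_nonneg v).trans hv
  have hr : 0 ≤ r := by linarith [mul_nonneg hα (by positivity : 0 ≤ 1 + q ^ 2)]
  have hsub : x + parabolicScaling u q (v - α • u) - (x - r • u)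
      = q • v + (r - α * q ^ 2) • u := by
    rw [map_sub, map_smul, parabolicScaling_of_inner_eq_zero huv, parabolicScaling_self hu]
    module
  have huqv : inner ℝ u (q • v) = 0 := by rw [real_inner_smul_right, huv, mul_zero]
  rw [mem_closedBall_iff_norm, hsub]
  refine le_of_sq_le_sq ?_ hr
  calc ‖q • v + (r - α * q ^ 2) • u‖ ^ 2
      = q ^ 2 * ‖v‖ ^ 2 + (r - α * q ^ 2) ^ 2 := by
        rw [norm_add_smul_sq_of_inner_eq_zero hu huqv, norm_smul, mul_pow, Real.norm_eq_abs, sq_abs]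
    _ ≤ q ^ 2 * α ^ 2 + (r - α * q ^ 2) ^ 2 := by gcongr
    _ = r ^ 2 + α * q ^ 2 * (α * (1 + q ^ 2) - 2 * r) := by ring
    _ ≤ r ^ 2 := by
        linarith [mul_nonneg (mul_nonneg hα (sq_nonneg q)) (sub_nonneg.2 hαr)]

/-- For a unit vector `u`, the circular cone with apex `u` whose base is the disc of radius `α`
around `-α • u` orthogonal to `u`. It is the shape whose images under `parabolicScaling u q` fit
into the convex hull of a point and a ball. -/
def circularCone (u : E) (α : ℝ) : Set E :=
  convexHull ℝ (insert u ((fun v => v - α • u) '' {v | inner ℝ u v = 0 ∧ ‖v‖ ≤ α}))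

theorem add_smul_mem_circularCone {v : E} (huv : inner ℝ u v = 0) {α m : ℝ} (hm : 0 < m)
    (hm1 : m ≤ 1) (hv : ‖v‖ ≤ m * α) : v + (1 - m * (1 + α)) • u ∈ circularCone u α := by
  have hbase : m⁻¹ • v ∈ {v : E | inner ℝ u v = 0 ∧ ‖v‖ ≤ α} := by
    refine ⟨by rw [real_inner_smul_right, huv, mul_zero], ?_⟩
    rwa [norm_smul, norm_inv, Real.norm_of_nonneg hm.le, inv_mul_le_iff₀ hm]
  have hcomb : v + (1 - m * (1 + α)) • u = (1 - m) • u + m • (m⁻¹ • v - α • u) := by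
    rw [smul_sub, smul_inv_smul₀ hm.ne']
    module
  rw [hcomb]
  exact convex_convexHull ℝ _ (subset_convexHull ℝ _ (mem_insert _ _))
    (subset_convexHull ℝ _ (mem_insert_of_mem _ (mem_image_of_mem _ hbase)))
    (sub_nonneg.2 hm1) hm.le (sub_add_cancel 1 m)

theorem ball_subset_circularCone (hu : ‖u‖ = 1) {α : ℝ} (hα : 0 < α) :
    ball ((1 / 2 : ℝ) • u) (α / (4 * (1 + α))) ⊆ circularCone u α := by
  intro g hg
  set h := g - (1 / 2 : ℝ) • u with hh
  set t := inner ℝ u h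
  set m := (1 / 2 - t) / (1 + α) with hm
  have hnorm : ‖h‖ < α / (4 * (1 + α)) := mem_ball_iff_norm.1 hg
  have hradius : α / (4 * (1 + α)) ≤ 1 / 4 := by
    rw [div_le_div_iff₀ (by positivity) (by norm_num)]
    linarith
  have ht : |t| < 1 / 4 := by
    have habs : |t| ≤ ‖h‖ := by simpa only [hu, one_mul] using abs_real_inner_le_norm u h
    linarith
  obtain ⟨ht_lower, ht_upper⟩ := abs_lt.1 ht
  have hm_pos : 0 < m := div_pos (by linarith) (by positivity)
  have hm_le : m ≤ 1 := by
    rw [hm, div_le_one (by positivity)]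
    linarith
  have hm_norm : ‖h - t • u‖ ≤ m * α := calc
    ‖h - t • u‖ ≤ ‖h‖ := norm_sub_inner_smul_le hu h
    _ ≤ 1 / 4 / (1 + α) * α := by
      rw [div_div, div_mul_eq_mul_div, one_mul]
      exact hnorm.le
    _ ≤ m * α := by
      rw [hm]
      gcongr
      linarith
  have hdecomp : g = (h - t • u) + (1 - m * (1 + α)) • u := by
    rw [hm, div_mul_cancel₀ _ (by positivity), hh]
    module
  rw [hdecomp]
  exact add_smul_mem_circularCone (inner_sub_inner_smul_self_eq_zero hu h) hm_pos hm_le hm_norm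

theorem add_parabolicScaling_mem_convexHull (hu : ‖u‖ = 1) {α q r : ℝ}
    (hαr : α * (1 + q ^ 2) ≤ 2 * r) (x : E) {g : E} (hg : g ∈ circularCone u α) :
    x + parabolicScaling u q g ∈
      convexHull ℝ (closedBall (x - r • u) r ∪ {x + q ^ 2 • u}) := by
  have hconvex := ((convex_convexHull ℝ (closedBall (x - r • u) r ∪ {x + q ^ 2 • u}))
    |>.translate_preimage_right x).linear_preimage (parabolicScaling u q)
  refine convexHull_min ?_ hconvex hg
  rintro _ (rfl | ⟨v, ⟨huv, hv⟩, rfl⟩) <;> refine subset_convexHull ℝ _ ?_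
  · exact Or.inr (congrArg (x + ·) (parabolicScaling_self hu q))
  · exact Or.inl (add_parabolicScaling_mem_closedBall hu huv hv hαr x)

theorem center_eq_of_inner_nonpos (hu : ‖u‖ = 1) {x z : E} {r : ℝ} (hx : x ∈ closedBall z r)
    (hsupp : ∀ w ∈ closedBall z r, inner ℝ u (w - x) ≤ 0) : z = x - r • u := by
  have hr : 0 ≤ r := dist_nonneg.trans hx
  have hnorm : ‖x - z‖ ≤ r := mem_closedBall_iff_norm.1 hx
  have hpole : r ≤ inner ℝ u (x - z) := by
    have hmem : z + r • u ∈ closedBall z r := by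
      rw [mem_closedBall_iff_norm, add_sub_cancel_left, norm_smul, hu, mul_one,
        Real.norm_of_nonneg hr]
    have hle := hsupp _ hmem
    rw [show z + r • u - x = r • u - (x - z) by abel, inner_sub_right, real_inner_smul_right,
      real_inner_self_eq_norm_sq, hu] at hle
    linarith
  have hsq : ‖x - z - r • u‖ ^ 2 ≤ 0 := calc
    ‖x - z - r • u‖ ^ 2 = ‖x - z‖ ^ 2 - 2 * (r * inner ℝ u (x - z)) + r ^ 2 := by
      rw [norm_sub_sq_real, real_inner_smul_right, real_inner_comm, norm_smul, hu, mul_one,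
        Real.norm_of_nonneg hr]
    _ ≤ r ^ 2 - 2 * (r * r) + r ^ 2 := by gcongr
    _ = 0 := by ring
  have hzero : x - z - r • u = 0 :=
    norm_eq_zero.1 (pow_eq_zero_iff two_ne_zero |>.1 (hsq.antisymm (sq_nonneg _)))
  rw [sub_right_comm, sub_eq_zero] at hzero
  exact hzero.symm

theorem BallSlidesFreely.closedBall_subset {K : Set E} {r : ℝ} (hK : BallSlidesFreely r K)
    (hu : ‖u‖ = 1) {x : E} (hx : x ∈ K) (hsupp : ∀ w ∈ K, inner ℝ u (w - x) ≤ 0) :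
    closedBall (x - r • u) r ⊆ K := by
  obtain ⟨z, hxz, hzK⟩ := hK x hx
  rwa [← center_eq_of_inner_nonpos hu hxz fun w hw => hsupp w (hzK hw)]

theorem exists_unit_normal_of_infDist_pos {K : Set E} (hcomp : IsCompact K)
    (hconv : Convex ℝ K) {y : E} (hy : 0 < infDist y K) :
    ∃ x ∈ K, ∃ u : E, ‖u‖ = 1 ∧ y = x + infDist y K • u ∧ ∀ w ∈ K, inner ℝ u (w - x) ≤ 0 := by
  have hne : K.Nonempty := nonempty_iff_ne_empty.2 fun h => by simp [h] at hy
  obtain ⟨x, hx, hxy⟩ := hcomp.exists_infDist_eq_dist hne y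
  have hnorm : ‖y - x‖ = infDist y K := by rw [hxy, dist_eq_norm]
  have hmin : ‖y - x‖ = ⨅ w : K, ‖y - w‖ := by simp only [hnorm, infDist_eq_iInf, dist_eq_norm]
  refine ⟨x, hx, (infDist y K)⁻¹ • (y - x), ?_, ?_, fun w hw => ?_⟩
  · rw [norm_smul, hnorm, norm_inv, Real.norm_of_nonneg hy.le, inv_mul_cancel₀ hy.ne']
  · rw [smul_inv_smul₀ hy.ne', add_sub_cancel]
  · rw [real_inner_smul_left]
    exact mul_nonpos_of_nonneg_of_nonpos (inv_nonneg.2 hy.le)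
      ((norm_eq_iInf_iff_real_inner_le_zero hconv hx).1 hmin w hw)

variable [FiniteDimensional ℝ E] [MeasurableSpace E] [BorelSpace E]
  (μ : Measure E) [μ.IsAddHaarMeasure]

theorem measureReal_image_add_parabolicScaling (hu : ‖u‖ = 1) (q : ℝ) (x : E) (s : Set E) :
    μ.real ((fun g => x + parabolicScaling u q g) '' s) =
      |q| ^ (Module.finrank ℝ E + 1) * μ.real s := by
  rw [← image_image (x + ·), image_add_left, measureReal_def, measure_preimage_add,
    Measure.addHaar_image_linearMap, det_parabolicScaling hu, abs_pow, ENNReal.toReal_mul,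
    ENNReal.toReal_ofReal (by positivity), measureReal_def]

theorem measureReal_add_le_measureReal_convexHull (hu : ‖u‖ = 1) {K : Set E}
    (hmeas : MeasurableSet K) (hbdd : Bornology.IsBounded K) {x : E}
    (hsupp : ∀ w ∈ K, inner ℝ u (w - x) ≤ 0) {α q r : ℝ} (hball : closedBall (x - r • u) r ⊆ K)
    (hα : 0 < α) (hq : q ≠ 0) (hαr : α * (1 + q ^ 2) ≤ 2 * r) :
    |q| ^ (Module.finrank ℝ E + 1) * μ.real (ball 0 (α / (4 * (1 + α)))) + μ.real K ≤
      μ.real (convexHull ℝ (K ∪ {x + q ^ 2 • u})) := by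
  set B := ball ((1 / 2 : ℝ) • u) (α / (4 * (1 + α)))
  set S := (fun g => x + parabolicScaling u q g) '' B
  have hsub : S ∪ K ⊆ convexHull ℝ (K ∪ {x + q ^ 2 • u}) := by
    refine union_subset ?_ (subset_union_left.trans (subset_convexHull ℝ _))
    rintro _ ⟨g, hg, rfl⟩
    exact convexHull_mono (union_subset_union_left _ hball)
      (add_parabolicScaling_mem_convexHull hu hαr x (ball_subset_circularCone hu hα hg))
  have hradius : α / (4 * (1 + α)) ≤ 1 / 2 := by
    rw [div_le_div_iff₀ (by positivity) two_pos]
    linarith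
  have hdisj : Disjoint S K := by
    rw [Set.disjoint_left]
    rintro _ ⟨g, hg, rfl⟩ hgK
    have hnonpos := hsupp _ hgK
    rw [add_sub_cancel_left, inner_parabolicScaling hu] at hnonpos
    have hpos := inner_pos_of_mem_ball_smul hu (ball_subset_ball hradius hg)
    exact (mul_pos (by positivity) hpos).not_ge hnonpos
  have hfin : μ (convexHull ℝ (K ∪ {x + q ^ 2 • u})) ≠ ⊤ :=
    (isBounded_convexHull.2 (hbdd.union Bornology.isBounded_singleton)).measure_lt_top.ne
  have hfinS : μ S ≠ ⊤ := measure_ne_top_of_subset (subset_union_left.trans hsub) hfin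
  calc _ = μ.real S + μ.real K := by
        rw [measureReal_image_add_parabolicScaling μ hu,
          Measure.addHaar_real_ball_center μ ((1 / 2 : ℝ) • u)]
    _ = μ.real (S ∪ K) := (measureReal_union hdisj hmeas hfinS hbdd.measure_lt_top.ne).symm
    _ ≤ _ := measureReal_mono hsub hfin

theorem statement2_general {r R : ℝ} (hr : 0 < r) (hR : 0 < R) :
    ∃ c : ℝ, 0 < c ∧ ∀ K : Set E, IsCompact K → Convex ℝ K → BallSlidesFreely r K →
      ∀ ε : ℝ, 0 < ε → ε ≤ R → ∀ y : E, infDist y K = ε →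
        c * ε ^ (((Module.finrank ℝ E : ℝ) + 1) / 2) ≤
          μ.real (convexHull ℝ (K ∪ {y})) - μ.real K := by
  set α := 2 * r / (1 + R)
  have hα : 0 < α := by positivity
  refine ⟨μ.real (ball 0 (α / (4 * (1 + α)))),
    ENNReal.toReal_pos (measure_ball_pos μ _ (by positivity)).ne' measure_ball_lt_top.ne, ?_⟩
  rintro K hcomp hconv hslide _ hε hεR y rfl
  obtain ⟨x, hx, u, hu, hy, hsupp⟩ := exists_unit_normal_of_infDist_pos hcomp hconv hε
  set ε := infDist y K
  have hsq : √ε ^ 2 = ε := Real.sq_sqrt hε.le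
  have hαr : α * (1 + √ε ^ 2) ≤ 2 * r := by
    rw [hsq, div_mul_eq_mul_div, div_le_iff₀ (by positivity)]
    gcongr
  have hpow : ε ^ (((Module.finrank ℝ E : ℝ) + 1) / 2) = √ε ^ (Module.finrank ℝ E + 1) := by
    rw [Real.rpow_div_two_eq_sqrt _ hε.le]
    exact_mod_cast Real.rpow_natCast √ε (Module.finrank ℝ E + 1)
  have hle := measureReal_add_le_measureReal_convexHull μ hu hcomp.measurableSet hcomp.isBounded
    hsupp (hslide.closedBall_subset hu hx hsupp) hα (Real.sqrt_ne_zero'.2 hε) hαr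
  rw [abs_of_nonneg (Real.sqrt_nonneg ε), hsq, ← hy] at hle
  rw [hpow, mul_comm]
  exact le_sub_iff_add_le.2 hle

end InnerProductSpace

theorem statement2 {d : ℕ} (hd : 2 ≤ d) (K : Set (EuclideanSpace ℝ (Fin d)))
    (hKcomp : IsCompact K) (hKconv : Convex ℝ K) (hKint : (interior K).Nonempty)
    (r : ℝ) (hr : 0 < r)
    (hslide : ∀ x ∈ K, ∃ z : EuclideanSpace ℝ (Fin d),
      x ∈ closedBall z r ∧ closedBall z r ⊆ K) :
    ∃ c : ℝ, 0 < c ∧ ∀ ε : ℝ, 0 < ε → ε ≤ 1 →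
      ∀ y : EuclideanSpace ℝ (Fin d), infDist y K = ε →
        c * ε ^ (((d : ℝ) + 1) / 2) ≤
          (volume (convexHull ℝ (K ∪ {y}))).toReal - (volume K).toReal := by
  obtain ⟨c, hc, h⟩ := statement2_general (E := EuclideanSpace ℝ (Fin d)) volume hr one_pos
  exact ⟨c, hc, by
    simpa only [finrank_euclideanSpace_fin, measureReal_def] using h K hKcomp hKconv hslide⟩
end

section
/- Let d ≥ 2 and let K be a convex body in ℝ^d which slides freely inside a ball of radius R. Then there are constants c₀, c₁ > 0 (depending on K, d) such that for every ε with 0 < ε < c₀ there exists a finite set S of points, each at distance exactly ε from K, with cardinality |S| ≥ c₁·ε^{−1/2}, such that for any two distinct points x, y ∈ S the closed segment [x, y] meets the interior of K. -/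
open Metric Set
open scoped Pointwise

/-!
The midpoint of a chord of length `ℓ` of a ball of radius `R` sits at depth at least
`ℓ ^ 2 / (8 * R)`, and Minkowski cancellation hands this quadratic convexity down to every summand
of the ball. If `x` and `y` lie at distance `ε` from `K` and are a large multiple of `√ε` apart,
then nearly closest points of `K` span a chord whose midpoint has depth greater than `ε`, so the
midpoint of `x` and `y` is interior to `K`. A segment inside `K` carries about `ε ^ (-1 / 2)` points
with such gaps, separated by a linear functional of norm at most one. Moving each of them along a
direction in the kernel of the functional until its distance from `K` is `ε` keeps them separated.
-/

theorem isBounded_of_isBounded_add {E : Type*} [SeminormedAddCommGroup E] {K M : Set E}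
    (h : Bornology.IsBounded (K + M)) (hM : M.Nonempty) : Bornology.IsBounded K := by
  obtain ⟨m, hm⟩ := hM
  refine (h.sub (Bornology.isBounded_singleton (x := m))).subset fun k hk ↦ ?_
  exact ⟨k + m, add_mem_add hk hm, m, rfl, add_sub_cancel_right k m⟩

section Cancellation

variable {E : Type*} [AddCommGroup E] [Module ℝ E] [TopologicalSpace E] [IsTopologicalAddGroup E]
  [ContinuousSMul ℝ E] [LocallyConvexSpace ℝ E]

theorem subset_closure_of_add_subset_add {A K M : Set E} (hK : Convex ℝ K)
    (hM : Bornology.IsVonNBounded ℝ M) (hM₀ : M.Nonempty) (h : A + M ⊆ K + M) :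
    A ⊆ closure K := by
  intro z hz
  by_contra hzK
  obtain ⟨f, u, hfK, hfz⟩ := geometric_hahn_banach_closed_point hK.closure isClosed_closure hzK
  have hbdd : BddAbove (f '' M) :=
    ((NormedSpace.isVonNBounded_iff ℝ).1 (hM.image f)).bddAbove
  obtain ⟨_, ⟨y, hy, rfl⟩, hfy⟩ :=
    exists_lt_of_lt_csSup (hM₀.image f) (sub_lt_self (sSup (f '' M)) (sub_pos.2 hfz))
  obtain ⟨k, hk, y', hy', hsum⟩ := mem_add.1 (h (add_mem_add hz hy))
  have hfsum : f k + f y' = f z + f y := by rw [← map_add, ← map_add, hsum]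
  have hfy' : f y' ≤ sSup (f '' M) := le_csSup hbdd (mem_image_of_mem f hy')
  linarith [hfK k (subset_closure hk)]

end Cancellation

/-- Quadratic uniform convexity of a set: the midpoint of any chord of length `ℓ` is the centre of a
ball of radius `c * ℓ ^ 2` contained in the set. Only midpoints are considered; in this form
the property passes from a ball to its summands. -/
def IsStronglyMidpointConvex {E : Type*} [SeminormedAddCommGroup E] [NormedSpace ℝ E] (c : ℝ)
    (K : Set E) : Prop :=
  ∀ ⦃p⦄, p ∈ K → ∀ ⦃q⦄, q ∈ K → ball (midpoint ℝ p q) (c * dist p q ^ 2) ⊆ K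

section InnerProductSpace

variable {E : Type*} [SeminormedAddCommGroup E] [InnerProductSpace ℝ E]

theorem dist_midpoint_sq_add_le {p q w : E} {R : ℝ} (hp : p ∈ closedBall w R)
    (hq : q ∈ closedBall w R) : dist (midpoint ℝ p q) w ^ 2 + dist p q ^ 2 / 4 ≤ R ^ 2 := by
  rw [mem_closedBall, dist_eq_norm] at hp hq
  have hmid : midpoint ℝ p q - w = (2⁻¹ : ℝ) • ((p - w) + (q - w)) := by
    rw [midpoint_eq_smul_add, invOf_eq_inv]; module
  have hparallelogram := parallelogram_law_with_norm ℝ (p - w) (q - w)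
  rw [sub_sub_sub_cancel_right] at hparallelogram
  have hp_sq : ‖p - w‖ ^ 2 ≤ R ^ 2 := by gcongr
  have hq_sq : ‖q - w‖ ^ 2 ≤ R ^ 2 := by gcongr
  rw [dist_eq_norm, dist_eq_norm, hmid, norm_smul, Real.norm_of_nonneg (by norm_num)]
  linarith

theorem isStronglyMidpointConvex_closedBall (w : E) {R : ℝ} (hR : 0 < R) :
    IsStronglyMidpointConvex (1 / (8 * R)) (closedBall w R) := by
  intro p hp q hq z hz
  set ρ := 1 / (8 * R) * dist p q ^ 2 with hρ
  have hchord : dist p q ^ 2 = 8 * R * ρ := by rw [hρ]; field_simp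
  have hsq := dist_midpoint_sq_add_le hp hq
  have hρR : ρ ≤ R := by nlinarith [sq_nonneg (dist (midpoint ℝ p q) w)]
  have hdepth : dist (midpoint ℝ p q) w ≤ R - ρ :=
    le_of_sq_le_sq (by nlinarith [sq_nonneg ρ]) (sub_nonneg.2 hρR)
  exact mem_closedBall.2 (by linarith [dist_triangle z (midpoint ℝ p q) w, mem_ball.1 hz])

end InnerProductSpace

namespace IsStronglyMidpointConvex

variable {E : Type*} [SeminormedAddCommGroup E] [NormedSpace ℝ E] {c : ℝ} {K M : Set E}

theorem of_add_right (h : IsStronglyMidpointConvex c (K + M)) (hK : Convex ℝ K)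
    (hKint : (interior K).Nonempty) (hM : Bornology.IsBounded M) (hM₀ : M.Nonempty) :
    IsStronglyMidpointConvex c K := by
  intro p hp q hq
  have hadd : ball (midpoint ℝ p q) (c * dist p q ^ 2) + M ⊆ K + M := by
    rintro _ ⟨z, hz, y, hy, rfl⟩
    apply h (add_mem_add hp hy) (add_mem_add hq hy)
    have hmid : midpoint ℝ (p + y) (q + y) = midpoint ℝ p q + y := by
      simp only [midpoint_eq_smul_add, invOf_eq_inv]; module
    rwa [hmid, dist_add_right, mem_ball, dist_add_right]
  have hclosure : ball (midpoint ℝ p q) (c * dist p q ^ 2) ⊆ closure K :=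
    subset_closure_of_add_subset_add hK ((NormedSpace.isVonNBounded_iff ℝ).2 hM) hM₀ hadd
  calc ball (midpoint ℝ p q) (c * dist p q ^ 2)
      ⊆ interior (closure K) := interior_maximal hclosure isOpen_ball
    _ = interior K := hK.interior_closure_eq_interior_of_nonempty_interior hKint
    _ ⊆ K := interior_subset

theorem midpoint_mem_interior (h : IsStronglyMidpointConvex c K) (hc : 0 ≤ c) (hK : K.Nonempty)
    {x y : E} {η : ℝ} (hx : infDist x K < η) (hy : infDist y K < η) (hxy : 2 * η ≤ dist x y)
    (hη : η ≤ c * (dist x y - 2 * η) ^ 2) : midpoint ℝ x y ∈ interior K := by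
  obtain ⟨p, hp, hxp⟩ := (infDist_lt_iff hK).1 hx
  obtain ⟨q, hq, hyq⟩ := (infDist_lt_iff hK).1 hy
  have hpq : dist x y - 2 * η ≤ dist p q := by
    linarith [dist_triangle4 x p q y, dist_comm q y]
  refine interior_maximal (h hp hq) isOpen_ball (mem_ball.2 ?_)
  calc dist (midpoint ℝ x y) (midpoint ℝ p q)
      ≤ (dist x p + dist y q) / 2 := dist_midpoint_midpoint_le x y p q
    _ < η := by linarith
    _ ≤ c * (dist x y - 2 * η) ^ 2 := hη
    _ ≤ c * dist p q ^ 2 := by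
      have := sub_nonneg.2 hxy
      gcongr

theorem midpoint_mem_interior_of_sqrt_le_dist (h : IsStronglyMidpointConvex c K) (hc : 0 < c)
    (hK : K.Nonempty) {x y : E} {ε : ℝ} (hε : 0 < ε) (hcε : 8 * c * ε ≤ 1)
    (hx : infDist x K ≤ ε) (hy : infDist y K ≤ ε) (hxy : √(8 * ε / c) ≤ dist x y) :
    midpoint ℝ x y ∈ interior K := by
  have hsq : c * √(8 * ε / c) ^ 2 = 8 * ε := by
    rw [Real.sq_sqrt (by positivity)]; field_simp
  have hsmall : 8 * ε ≤ √(8 * ε / c) := by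
    refine Real.le_sqrt_of_sq_le ((le_div_iff₀ hc).2 ?_)
    nlinarith
  refine h.midpoint_mem_interior hc.le hK (η := 2 * ε) (by linarith) (by linarith) (by linarith) ?_
  calc 2 * ε = c * (√(8 * ε / c) / 2) ^ 2 := by linarith
    _ ≤ c * (dist x y - 2 * (2 * ε)) ^ 2 := by
      gcongr
      linarith

end IsStronglyMidpointConvex

theorem exists_ne_zero_dual_eq_zero {F V : Type*} [Field F] [AddCommGroup V] [Module F V]
    (hV : 1 < Module.rank F V) (φ : Module.Dual F V) : ∃ v ≠ 0, φ v = 0 := by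
  contrapose! hV
  have hinj : Function.Injective φ :=
    (injective_iff_map_eq_zero φ).2 fun v hv ↦ by_contra fun hv₀ ↦ hV v hv₀ hv
  simpa using LinearMap.lift_rank_le_of_injective φ hinj

theorem exists_separated_finset_subset_Icc {r δ : ℝ} (hr : 0 ≤ r) (hδ : 0 < δ) :
    ∃ T : Finset ℝ, ↑T ⊆ Icc 0 r ∧ r / δ ≤ T.card ∧
      (T : Set ℝ).Pairwise fun s t ↦ δ ≤ |s - t| := by
  have hinj : Function.Injective fun k : ℕ ↦ k * δ :=
    (mul_left_injective₀ hδ.ne').comp Nat.cast_injective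
  refine ⟨(Finset.range (⌊r / δ⌋₊ + 1)).image fun k : ℕ ↦ k * δ, ?_, ?_, ?_⟩
  · simp only [Finset.coe_image, Finset.coe_range, image_subset_iff]
    intro k hk
    have hk' : (k : ℝ) ≤ r / δ :=
      (Nat.le_floor_iff (by positivity)).1 (Nat.lt_succ_iff.1 hk)
    exact ⟨by positivity, (le_div_iff₀ hδ).1 hk'⟩
  · rw [Finset.card_image_of_injective _ hinj, Finset.card_range]
    exact_mod_cast (Nat.lt_floor_add_one (r / δ)).le
  · rw [Finset.coe_image, hinj.injOn.pairwise_image]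
    intro k _ l _ hkl
    have hone : (1 : ℝ) ≤ |(k : ℝ) - l| := by
      exact_mod_cast Int.one_le_abs (sub_ne_zero.2 (Nat.cast_injective.ne hkl : (k : ℤ) ≠ l))
    calc δ ≤ |(k : ℝ) - l| * δ := le_mul_of_one_le_left hδ.le hone
      _ = |k * δ - l * δ| := by rw [← sub_mul, abs_mul, abs_of_pos hδ]

section NormedSpace

variable {E : Type*} [NormedAddCommGroup E] [NormedSpace ℝ E] {K : Set E}

theorem exists_infDist_add_smul_eq (hK : Bornology.IsBounded K) {a v : E} (ha : a ∈ K)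
    (hv : v ≠ 0) {ε : ℝ} (hε : 0 ≤ ε) : ∃ s : ℝ, infDist (a + s • v) K = ε := by
  have hcont : Continuous fun s : ℝ ↦ infDist (a + s • v) K :=
    (continuous_infDist_pt K).comp (by fun_prop)
  refine mem_range_of_exists_le_of_exists_ge hcont
    ⟨0, by simpa [infDist_zero_of_mem ha] using hε⟩
    ⟨(diam K + ε) / ‖v‖, (le_infDist ⟨a, ha⟩).2 fun y hy ↦ ?_⟩
  have hfar : dist (a + ((diam K + ε) / ‖v‖) • v) a = diam K + ε := by
    have := norm_ne_zero_iff.2 hv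
    rw [dist_self_add_left, norm_smul, Real.norm_of_nonneg (by positivity)]
    field_simp
  linarith [dist_triangle (a + ((diam K + ε) / ‖v‖) • v) y a, dist_le_diam_of_mem hK hy ha]

theorem exists_separated_finset_infDist_eq (hE : 1 < Module.rank ℝ E)
    (hK : Bornology.IsBounded K) {a : E} {r : ℝ} (hr : 0 ≤ r) (ha : closedBall a r ⊆ K)
    {ε δ : ℝ} (hε : 0 ≤ ε) (hδ : 0 < δ) :
    ∃ S : Finset E, (∀ x ∈ S, infDist x K = ε) ∧ r / δ ≤ S.card ∧
      (S : Set E).Pairwise fun x y ↦ δ ≤ dist x y := by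
  have : Nontrivial E := rank_pos_iff_nontrivial.1 (one_pos.trans hE)
  obtain ⟨e, he⟩ := exists_norm_eq E zero_le_one
  obtain ⟨φ, hφ, hφe⟩ := exists_dual_vector'' ℝ e
  obtain ⟨v, hv, hφv⟩ := exists_ne_zero_dual_eq_zero hE φ.toLinearMap
  have hlevel : ∀ t ∈ Icc 0 r, ∃ x, infDist x K = ε ∧ φ x = φ a + t := by
    intro t ht
    have hmem : a + t • e ∈ K := ha (by simpa [norm_smul, he, abs_of_nonneg ht.1] using ht.2)
    obtain ⟨s, hs⟩ := exists_infDist_add_smul_eq hK hmem hv hε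
    exact ⟨_, hs, by simp_all⟩
  choose! x hxK hφx using hlevel
  obtain ⟨T, hT, hTcard, hTsep⟩ := exists_separated_finset_subset_Icc hr hδ
  have hdist : ∀ s ∈ T, ∀ t ∈ T, |s - t| ≤ dist (x s) (x t) := by
    intro s hs t ht
    have hle := φ.le_of_opNorm_le hφ (x s - x t)
    rwa [map_sub, hφx s (hT hs), hφx t (hT ht), add_sub_add_left_eq_sub, one_mul, Real.norm_eq_abs,
      ← dist_eq_norm] at hle
  have hinj : InjOn x T := fun s hs t ht hst ↦
    sub_eq_zero.1 (abs_nonpos_iff.1 (by simpa [hst] using hdist s hs t ht))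
  classical
  refine ⟨T.image x, Finset.forall_mem_image.2 fun t ht ↦ hxK t (hT ht), ?_, ?_⟩
  · rwa [Finset.card_image_of_injOn hinj]
  · rw [Finset.coe_image, hinj.pairwise_image]
    exact fun s hs t ht hst ↦ (hTsep hs ht hst).trans (hdist s hs t ht)

theorem IsStronglyMidpointConvex.exists_finset_segment_inter_interior {c : ℝ}
    (h : IsStronglyMidpointConvex c K) (hc : 0 < c) (hE : 1 < Module.rank ℝ E)
    (hK : Bornology.IsBounded K) (hKint : (interior K).Nonempty) :
    ∃ c₀ c₁ : ℝ, 0 < c₀ ∧ 0 < c₁ ∧ ∀ ε : ℝ, 0 < ε → ε < c₀ →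
      ∃ S : Finset E, (∀ x ∈ S, infDist x K = ε) ∧ c₁ * ε ^ (-(1 : ℝ) / 2) ≤ (S.card : ℝ) ∧
        ∀ x ∈ S, ∀ y ∈ S, x ≠ y → (segment ℝ x y ∩ interior K).Nonempty := by
  obtain ⟨a, ha⟩ := hKint
  obtain ⟨r, hr, hrK⟩ := nhds_basis_closedBall.mem_iff.1 (mem_interior_iff_mem_nhds.1 ha)
  refine ⟨1 / (8 * c), r / √(8 / c), by positivity, by positivity, fun ε hε hεc ↦ ?_⟩
  have hcε : 8 * c * ε ≤ 1 := by
    rw [mul_comm]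
    exact ((lt_div_iff₀ (by positivity)).1 hεc).le
  obtain ⟨S, hSK, hScard, hSsep⟩ := exists_separated_finset_infDist_eq hE hK hr.le hrK hε.le
    (show 0 < √(8 * ε / c) by positivity)
  refine ⟨S, hSK, ?_, fun x hx y hy hxy ↦ ⟨midpoint ℝ x y, midpoint_mem_segment x y, ?_⟩⟩
  · have hpow : ε ^ (-(1 : ℝ) / 2) = (√ε)⁻¹ := by
      rw [neg_div, Real.rpow_neg hε.le, Real.sqrt_eq_rpow]
    have hsqrt : √(8 * ε / c) = √(8 / c) * √ε := by
      rw [← Real.sqrt_mul (by positivity), div_mul_eq_mul_div]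
    rwa [hpow, ← div_eq_mul_inv, div_div, ← hsqrt]
  · exact h.midpoint_mem_interior_of_sqrt_le_dist hc ⟨a, interior_subset ha⟩ hε hcε
      (hSK x hx).le (hSK y hy).le (hSsep hx hy hxy)

end NormedSpace

theorem statement5_general {E : Type*} [NormedAddCommGroup E] [InnerProductSpace ℝ E]
    (hE : 1 < Module.rank ℝ E) {K M : Set E} (hK : Convex ℝ K) (hKint : (interior K).Nonempty)
    {w : E} {R : ℝ} (hR : 0 < R) (hslide : K + M = closedBall w R) :
    ∃ c₀ c₁ : ℝ, 0 < c₀ ∧ 0 < c₁ ∧ ∀ ε : ℝ, 0 < ε → ε < c₀ →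
      ∃ S : Finset E, (∀ x ∈ S, infDist x K = ε) ∧ c₁ * ε ^ (-(1 : ℝ) / 2) ≤ (S.card : ℝ) ∧
        ∀ x ∈ S, ∀ y ∈ S, x ≠ y → (segment ℝ x y ∩ interior K).Nonempty := by
  have hsum : (K + M).Nonempty := hslide ▸ nonempty_closedBall.2 hR.le
  have hbdd : Bornology.IsBounded (K + M) := hslide ▸ isBounded_closedBall
  have hKbdd : Bornology.IsBounded K := isBounded_of_isBounded_add hbdd hsum.of_add_right
  have hMbdd : Bornology.IsBounded M :=
    isBounded_of_isBounded_add (add_comm K M ▸ hbdd) hsum.of_add_left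
  have hball : IsStronglyMidpointConvex (1 / (8 * R)) (K + M) :=
    hslide ▸ isStronglyMidpointConvex_closedBall w hR
  have hconvex : IsStronglyMidpointConvex (1 / (8 * R)) K :=
    hball.of_add_right hK hKint hMbdd hsum.of_add_right
  exact hconvex.exists_finset_segment_inter_interior (by positivity) hE hKbdd hKint

theorem statement5 {d : ℕ} (hd : 2 ≤ d) (K : Set (EuclideanSpace ℝ (Fin d)))
    (hKcomp : IsCompact K) (hKconv : Convex ℝ K) (hKint : (interior K).Nonempty)
    (R : ℝ) (hR : 0 < R)
    (hslide : ∃ M : Set (EuclideanSpace ℝ (Fin d)), IsCompact M ∧ Convex ℝ M ∧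
      ∃ w : EuclideanSpace ℝ (Fin d), K + M = closedBall w R) :
    ∃ c₀ c₁ : ℝ, 0 < c₀ ∧ 0 < c₁ ∧ ∀ ε : ℝ, 0 < ε → ε < c₀ →
      ∃ S : Finset (EuclideanSpace ℝ (Fin d)),
        (∀ x ∈ S, infDist x K = ε) ∧
        c₁ * ε ^ (-(1 : ℝ) / 2) ≤ (S.card : ℝ) ∧
        ∀ x ∈ S, ∀ y ∈ S, x ≠ y → (segment ℝ x y ∩ interior K).Nonempty := by
  obtain ⟨M, -, -, w, hKM⟩ := hslide
  have hrank : 1 < Module.rank ℝ (EuclideanSpace ℝ (Fin d)) :=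
    Module.lt_rank_of_lt_finrank (by rwa [finrank_euclideanSpace_fin])
  exact statement5_general hrank hKconv hKint hR hKM
end

section
/- Let d ≥ 2 and let K be a convex body in ℝ^d which slides freely inside a ball of radius R. Let 0 < ε < 2R and let x, y ∈ ℝ^d be points with dist(x, K) = dist(y, K) = ε. If ‖x − y‖ ≥ 4·√(Rε), then the closed segment [x, y] intersects the interior of K. -/
open Metric Set
open scoped Pointwise

/-!
If the segment `[x, y]` misses the interior of `K`, a hyperplane separates it from `K`. As `K`
slides freely inside the ball of radius `R`, it lies in a ball of radius `R` that is tangent, at a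
point `p ∈ K`, to the hyperplane through `p` parallel to the separating one. Both endpoints lie
beyond that hyperplane and in the concentric ball of radius `R + ε`, so by Pythagoras each is within
`√((R + ε) ^ 2 - R ^ 2)` of `p`. For `0 < ε < 2 * R` this is less than `2 * √(R * ε)`, and the
triangle inequality through `p` contradicts the lower bound on `‖x - y‖`.
-/

theorem exists_subset_closedBall_sub_of_add_eq_closedBall {E : Type*} [SeminormedAddCommGroup E]
    {K M : Set E} {w z : E} {R : ℝ} (hKM : K + M = closedBall w R) (hz : ‖z‖ ≤ R) :
    ∃ p ∈ K, K ⊆ closedBall (p - z) R := by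
  have hwz : w + z ∈ K + M := by simpa [hKM] using hz
  obtain ⟨p, hp, m, hm, hpm⟩ := mem_add.1 hwz
  refine ⟨p, hp, fun k hk ↦ ?_⟩
  have hkm : k + m ∈ closedBall w R := hKM ▸ add_mem_add hk hm
  rw [mem_closedBall_iff_norm] at hkm ⊢
  have hcenter : p - z = w - m := sub_eq_sub_iff_add_eq_add.2 hpm
  rwa [hcenter, sub_sub_eq_add_sub]

theorem dist_le_add_infDist_of_subset_closedBall {X : Type*} [PseudoMetricSpace X] {s : Set X}
    {c x : X} {r : ℝ} (hs : s.Nonempty) (hsub : s ⊆ closedBall c r) :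
    dist x c ≤ r + infDist x s := by
  rw [← sub_le_iff_le_add', le_infDist hs]
  intro y hy
  linarith [dist_triangle x y c, mem_closedBall.1 (hsub hy)]

theorem sqrt_add_sq_sub_sq_lt {R ε : ℝ} (hε : 0 < ε) (hεR : ε < 2 * R) :
    √((R + ε) ^ 2 - R ^ 2) < 2 * √(R * ε) := by
  have hR : 0 < R := by linarith
  rw [Real.sqrt_lt' (by positivity), mul_pow, Real.sq_sqrt (by positivity)]
  linear_combination mul_lt_mul_of_pos_left hεR hε

section InnerProductSpace

variable {E : Type*} [NormedAddCommGroup E] [InnerProductSpace ℝ E]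

theorem norm_sub_le_sqrt_of_subset_closedBall {K : Set E} {p x z : E} {ε : ℝ} (hK : K.Nonempty)
    (hsub : K ⊆ closedBall (p - z) ‖z‖) (hpx : inner ℝ z p ≤ inner ℝ z x) (hx : infDist x K ≤ ε) :
    ‖x - p‖ ≤ √((‖z‖ + ε) ^ 2 - ‖z‖ ^ 2) := by
  have hcenter : ‖x - p + z‖ ≤ ‖z‖ + ε := by
    rw [sub_add, ← dist_eq_norm]
    exact (dist_le_add_infDist_of_subset_closedBall hK hsub).trans (by gcongr)
  have hinner : 0 ≤ inner ℝ (x - p) z := by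
    rw [real_inner_comm, inner_sub_right]
    exact sub_nonneg.2 hpx
  apply Real.le_sqrt_of_sq_le
  have hpyth := norm_add_sq_real (x - p) z
  have hsq : ‖x - p + z‖ ^ 2 ≤ (‖z‖ + ε) ^ 2 := by gcongr
  linarith

theorem exists_norm_eq_forall_inner_le_of_disjoint_interior [CompleteSpace E] {s t : Set E} {r : ℝ}
    (hr : 0 ≤ r) (hs : Convex ℝ s) (ht : Convex ℝ t) (hst : Disjoint (interior s) t)
    (hsint : (interior s).Nonempty) (htne : t.Nonempty) :
    ∃ z : E, ‖z‖ = r ∧ ∀ a ∈ s, ∀ b ∈ t, inner ℝ z a ≤ inner ℝ z b := by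
  obtain ⟨f, c, hf, hfs, hft⟩ :=
    geometric_hahn_banach_of_nonempty_interior hs ht hst hsint htne
  obtain ⟨v, rfl⟩ := (InnerProductSpace.toDual ℝ E).surjective f
  have hv : v ≠ 0 := by simpa using hf
  refine ⟨(r * ‖v‖⁻¹) • v, norm_smul_inv_norm' hr hv, fun a ha b hb ↦ ?_⟩
  have hab : inner ℝ v a ≤ inner ℝ v b := (hfs a ha).trans (hft b hb)
  rw [real_inner_smul_left, real_inner_smul_left]
  gcongr

theorem statement6_general [CompleteSpace E] {K M : Set E} {w x y : E} {R ε : ℝ}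
    (hKconv : Convex ℝ K) (hKint : (interior K).Nonempty) (hR : 0 ≤ R)
    (hslide : K + M = closedBall w R) (hx : infDist x K ≤ ε) (hy : infDist y K ≤ ε)
    (hxy : 2 * √((R + ε) ^ 2 - R ^ 2) < ‖x - y‖) :
    (segment ℝ x y ∩ interior K).Nonempty := by
  by_contra hempty
  have hdisj : Disjoint (interior K) (segment ℝ x y) :=
    (disjoint_iff_inter_eq_empty.2 (not_nonempty_iff_eq_empty.1 hempty)).symm
  obtain ⟨z, rfl, hsep⟩ := exists_norm_eq_forall_inner_le_of_disjoint_interior hR hKconv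
    (convex_segment x y) hdisj hKint ⟨x, left_mem_segment ℝ x y⟩
  obtain ⟨p, hp, hsub⟩ := exists_subset_closedBall_sub_of_add_eq_closedBall hslide le_rfl
  have hxp := norm_sub_le_sqrt_of_subset_closedBall ⟨p, hp⟩ hsub
    (hsep p hp x (left_mem_segment ℝ x y)) hx
  have hyp := norm_sub_le_sqrt_of_subset_closedBall ⟨p, hp⟩ hsub
    (hsep p hp y (right_mem_segment ℝ x y)) hy
  rw [norm_sub_rev] at hyp
  linarith [norm_sub_le_norm_sub_add_norm_sub x p y]

end InnerProductSpace

theorem statement6 {d : ℕ} (hd : 2 ≤ d) (K : Set (EuclideanSpace ℝ (Fin d)))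
    (hKcomp : IsCompact K) (hKconv : Convex ℝ K) (hKint : (interior K).Nonempty)
    (R : ℝ) (hR : 0 < R)
    (hslide : ∃ M : Set (EuclideanSpace ℝ (Fin d)), IsCompact M ∧ Convex ℝ M ∧
      ∃ w : EuclideanSpace ℝ (Fin d), K + M = closedBall w R)
    (ε : ℝ) (hε : 0 < ε) (hε2R : ε < 2 * R)
    (x y : EuclideanSpace ℝ (Fin d)) (hx : infDist x K = ε) (hy : infDist y K = ε)
    (hxy : 4 * Real.sqrt (R * ε) ≤ ‖x - y‖) :
    (segment ℝ x y ∩ interior K).Nonempty := by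
  obtain ⟨M, -, -, w, hKM⟩ := hslide
  exact statement6_general hKconv hKint hR.le hKM hx.le hy.le
    (by linarith [sqrt_add_sq_sub_sq_lt hε hε2R])
end

section
/- Let d ≥ 2, let K ⊂ ℝ^d be a compact convex set and let M ⊂ ℝ^d be a compact convex set such that K + M is a closed ball of radius R (i.e. K slides freely inside a ball of radius R). Let p ∈ K and let u be a unit vector with ⟨p, u⟩ = h(K, u). Then there exists a point z ∈ ℝ^d such that K ⊆ closedBall(z, R) and ⟨p − z, u⟩ = R (so p lies on the boundary sphere of closedBall(z, R) and u is the outer unit normal of that ball at p). -/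
open Metric Set
open scoped InnerProductSpace Pointwise

/-- The support function of a set `K`: `h(K, u) = sup_{x ∈ K} ⟪x, u⟫`. -/
noncomputable def suppFn {d : ℕ} (K : Set (EuclideanSpace ℝ (Fin d)))
    (u : EuclideanSpace ℝ (Fin d)) : ℝ :=
  sSup ((fun x => ⟪x, u⟫_ℝ) '' K)

/-!
Since `w + R • u` lies in `K + M`, it decomposes as `k + m`. Then `K + m` lies in the ball around
`w`, so the ball of radius `R` around `w - m` contains `K` and has outer normal `u` at `k`.
As `p` is at least as far as `k` in the direction `u`, the equality case of Cauchy–Schwarz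
forces `p = k`.
-/

theorem isMaxOn_inner_of_eq_suppFn {d : ℕ} {K : Set (EuclideanSpace ℝ (Fin d))}
    {p u : EuclideanSpace ℝ (Fin d)} (hK : BddAbove ((fun x => ⟪x, u⟫_ℝ) '' K))
    (hpu : ⟪p, u⟫_ℝ = suppFn K u) : IsMaxOn (fun x => ⟪x, u⟫_ℝ) K p :=
  fun _ hx => (le_csSup hK (mem_image_of_mem _ hx)).trans_eq hpu.symm

theorem subset_closedBall_sub_of_add_subset {E : Type*} [SeminormedAddCommGroup E]
    {K M : Set E} {w m : E} {R : ℝ} (hsum : K + M ⊆ closedBall w R) (hm : m ∈ M) :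
    K ⊆ closedBall (w - m) R := by
  intro x hx
  have hxm : ‖x + m - w‖ ≤ R := mem_closedBall_iff_norm.mp (hsum (add_mem_add hx hm))
  rwa [mem_closedBall_iff_norm, sub_sub_eq_add_sub]

section InnerProductSpace

variable {E : Type*} [NormedAddCommGroup E] [InnerProductSpace ℝ E]

theorem eq_smul_of_norm_le_of_le_inner {v u : E} {R : ℝ} (hu : ‖u‖ = 1) (hv : ‖v‖ ≤ R)
    (hvu : R ≤ ⟪v, u⟫_ℝ) : v = R • u := by
  have hinner_le : ⟪v, u⟫_ℝ ≤ ‖v‖ := by simpa only [hu, mul_one] using real_inner_le_norm v u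
  have hnorm : ‖v‖ = R := le_antisymm hv (hvu.trans hinner_le)
  have hinner : ⟪v, u⟫_ℝ = ‖v‖ * ‖u‖ := by
    rw [hu, mul_one]
    exact le_antisymm hinner_le (hv.trans hvu)
  simpa only [hu, hnorm, one_smul] using inner_eq_norm_mul_iff_real.mp hinner

theorem statement7_general {K M : Set E} {w p u : E} {R : ℝ} (hR : 0 ≤ R)
    (hsum : K + M = closedBall w R) (hp : p ∈ K) (hu : ‖u‖ = 1)
    (hmax : IsMaxOn (fun x => ⟪x, u⟫_ℝ) K p) : K ⊆ closedBall (p - R • u) R := by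
  have hpole : w + R • u ∈ K + M := by
    simp [hsum, norm_smul, hu, abs_of_nonneg hR]
  obtain ⟨k, hk, m, hm, hkm : k + m = w + R • u⟩ := hpole
  have hball : K ⊆ closedBall (w - m) R := subset_closedBall_sub_of_add_subset hsum.le hm
  have hp_inner : R ≤ ⟪p - (w - m), u⟫_ℝ := calc
    R = ⟪R • u, u⟫_ℝ := by simp [inner_smul_left, hu]
    _ = ⟪k - (w - m), u⟫_ℝ := by rw [sub_sub_eq_add_sub, hkm, add_sub_cancel_left]
    _ = ⟪k, u⟫_ℝ - ⟪w - m, u⟫_ℝ := inner_sub_left ..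
    _ ≤ ⟪p, u⟫_ℝ - ⟪w - m, u⟫_ℝ := sub_le_sub_right (hmax hk) _
    _ = ⟪p - (w - m), u⟫_ℝ := (inner_sub_left ..).symm
  have hp_sub : p - (w - m) = R • u :=
    eq_smul_of_norm_le_of_le_inner hu (mem_closedBall_iff_norm.mp (hball hp)) hp_inner
  rwa [← hp_sub, sub_sub_cancel]

end InnerProductSpace

theorem statement7 {d : ℕ} (hd : 2 ≤ d) (K M : Set (EuclideanSpace ℝ (Fin d)))
    (hKcomp : IsCompact K) (hKconv : Convex ℝ K)
    (hMcomp : IsCompact M) (hMconv : Convex ℝ M)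
    (R : ℝ) (hR : 0 < R) (w : EuclideanSpace ℝ (Fin d))
    (hsum : K + M = closedBall w R)
    (p : EuclideanSpace ℝ (Fin d)) (hp : p ∈ K)
    (u : EuclideanSpace ℝ (Fin d)) (hu : ‖u‖ = 1)
    (hpu : ⟪p, u⟫_ℝ = suppFn K u) :
    ∃ z : EuclideanSpace ℝ (Fin d),
      K ⊆ closedBall z R ∧ ⟪p - z, u⟫_ℝ = R := by
  have hmax := isMaxOn_inner_of_eq_suppFn (hKcomp.bddAbove_image (by fun_prop)) hpu
  exact ⟨p - R • u, statement7_general hR.le hsum hp hu hmax, by simp [inner_smul_left, hu]⟩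
end

section
/- Let d ≥ 2 and let K be a convex body in ℝ^d. Suppose that the closed ball B(z, r) of radius r > 0 satisfies B(z, r) ⊆ K, that x ∈ B(z, r) is a boundary point of K, and that N is a unit vector with ⟨w, N⟩ ≤ ⟨x, N⟩ for all w ∈ K (an outer unit normal of K at x). Let ε > 0 and y = x + ε·N. Then every unit vector u with h(K^y, u) > h(K, u) satisfies ⟨u, N⟩ ≥ r/(r + ε). -/
open Metric Set
open scoped InnerProductSpace

/-!
The support function of `K ∪ {y}` is the maximum of `h(K, ·)` and `⟪y, ·⟫`, and passing to the
convex hull does not change it. A direction `u` in which adding `y` enlarges `K` therefore satisfies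
`⟪y, u⟫ > h(K, u) ≥ h(B(z, r), u) = ⟪z, u⟫ + r ‖u‖`. Since `N` is normal at a point `x` of the ball
`B(z, r) ⊆ K`, the equality case of Cauchy–Schwarz forces `x = z + r N`, hence `y - z = (r + ε) N`.
-/

theorem upperBounds_convexHull {𝕜 β : Type*} [Semiring 𝕜] [PartialOrder 𝕜] [AddCommMonoid β]
    [PartialOrder β] [IsOrderedAddMonoid β] [Module 𝕜 β] [PosSMulMono 𝕜 β] (s : Set β) :
    upperBounds (convexHull 𝕜 s) = upperBounds s := by
  ext b
  exact (convex_Iic b).convexHull_subset_iff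

section SupportFunction

variable {E : Type*} [SeminormedAddCommGroup E] [InnerProductSpace ℝ E] {s t : Set E} {y z u : E}
  {r : ℝ}

/-- The support function `h(s, u) = sup_{x ∈ s} ⟪x, u⟫` of a set `s` in a real inner product space,
extending `suppFn` to arbitrary dimension. It is a real supremum, hence `0` by convention if `s` is
empty or unbounded in the direction `u`. -/
noncomputable def supportFunction (s : Set E) (u : E) : ℝ :=
  sSup ((fun x ↦ ⟪x, u⟫_ℝ) '' s)

theorem supportFunction_mono (hs : s.Nonempty) (ht : BddAbove ((fun x ↦ ⟪x, u⟫_ℝ) '' t))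
    (hst : s ⊆ t) : supportFunction s u ≤ supportFunction t u :=
  csSup_le_csSup ht (hs.image _) (image_mono hst)

theorem supportFunction_insert (hs : s.Nonempty) (hbdd : BddAbove ((fun x ↦ ⟪x, u⟫_ℝ) '' s)) :
    supportFunction (insert y s) u = max ⟪y, u⟫_ℝ (supportFunction s u) := by
  rw [supportFunction, image_insert_eq, csSup_insert hbdd (hs.image _), supportFunction]

theorem supportFunction_convexHull (hs : s.Nonempty)
    (hbdd : BddAbove ((fun x ↦ ⟪x, u⟫_ℝ) '' s)) :
    supportFunction (convexHull ℝ s) u = supportFunction s u := by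
  have himage : (fun x ↦ ⟪x, u⟫_ℝ) '' convexHull ℝ s =
      convexHull ℝ ((fun x ↦ ⟪x, u⟫_ℝ) '' s) :=
    ((innerₗ E).flip u).image_convexHull s
  have hlub : IsLUB ((fun x ↦ ⟪x, u⟫_ℝ) '' convexHull ℝ s) (supportFunction s u) := by
    rw [himage, isLUB_congr (upperBounds_convexHull _)]
    exact isLUB_csSup (hs.image _) hbdd
  exact hlub.csSup_eq (hs.convexHull.image _)

theorem supportFunction_lt_supportFunction_convexHull_insert_iff (hs : s.Nonempty)
    (hbdd : BddAbove ((fun x ↦ ⟪x, u⟫_ℝ) '' s)) :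
    supportFunction s u < supportFunction (convexHull ℝ (insert y s)) u ↔
      supportFunction s u < ⟪y, u⟫_ℝ := by
  have hbdd_insert : BddAbove ((fun x ↦ ⟪x, u⟫_ℝ) '' insert y s) := by
    rw [image_insert_eq]
    exact hbdd.insert _
  rw [supportFunction_convexHull (insert_nonempty y s) hbdd_insert,
    supportFunction_insert hs hbdd, right_lt_sup, not_le]

theorem isGreatest_inner_closedBall (hr : 0 ≤ r) (z u : E) :
    IsGreatest ((fun x ↦ ⟪x, u⟫_ℝ) '' closedBall z r) (⟪z, u⟫_ℝ + r * ‖u‖) := by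
  refine ⟨⟨z + r • ‖u‖⁻¹ • u, ?_, ?_⟩, ?_⟩
  · rw [add_mem_closedBall_iff_norm, norm_smul, norm_smul, norm_inv, norm_norm,
      Real.norm_of_nonneg hr]
    exact mul_le_of_le_one_right hr inv_mul_le_one
  · simp only [inner_add_left, real_inner_smul_left, real_inner_self_eq_norm_mul_norm,
      ← mul_assoc, inv_mul_mul_self]
  · rintro _ ⟨w, hw, rfl⟩
    calc ⟪w, u⟫_ℝ = ⟪z, u⟫_ℝ + ⟪w - z, u⟫_ℝ := by rw [inner_sub_left, add_sub_cancel]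
      _ ≤ ⟪z, u⟫_ℝ + ‖w - z‖ * ‖u‖ := by gcongr; exact real_inner_le_norm _ _
      _ ≤ ⟪z, u⟫_ℝ + r * ‖u‖ := by gcongr; exact mem_closedBall_iff_norm.1 hw

theorem supportFunction_closedBall (hr : 0 ≤ r) (z u : E) :
    supportFunction (closedBall z r) u = ⟪z, u⟫_ℝ + r * ‖u‖ :=
  (isGreatest_inner_closedBall hr z u).csSup_eq

theorem mul_norm_lt_inner_sub_of_closedBall_subset (hr : 0 ≤ r) (hball : closedBall z r ⊆ s)
    (hbdd : BddAbove ((fun x ↦ ⟪x, u⟫_ℝ) '' s))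
    (hlt : supportFunction s u < supportFunction (convexHull ℝ (insert y s)) u) :
    r * ‖u‖ < ⟪y - z, u⟫_ℝ := by
  have hball_ne : (closedBall z r).Nonempty := nonempty_closedBall.2 hr
  rw [inner_sub_left, lt_sub_iff_add_lt']
  calc ⟪z, u⟫_ℝ + r * ‖u‖ = supportFunction (closedBall z r) u :=
        (supportFunction_closedBall hr z u).symm
    _ ≤ supportFunction s u := supportFunction_mono hball_ne hbdd hball
    _ < ⟪y, u⟫_ℝ :=
        (supportFunction_lt_supportFunction_convexHull_insert_iff (hball_ne.mono hball) hbdd).1 hlt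

end SupportFunction

section OuterNormal

variable {E : Type*} [NormedAddCommGroup E] [InnerProductSpace ℝ E] {K : Set E} {x y z u v N : E}
  {r ε : ℝ}

theorem eq_smul_of_norm_le_of_le_inner_s8 (hN : ‖N‖ = 1) (hv : ‖v‖ ≤ r) (hr : r ≤ ⟪v, N⟫_ℝ) :
    v = r • N := by
  have hinner_le : ⟪v, N⟫_ℝ ≤ ‖v‖ := by simpa only [hN, mul_one] using real_inner_le_norm v N
  have hnorm : ‖v‖ = r := hv.antisymm (hr.trans hinner_le)
  have hinner : ⟪v, N⟫_ℝ = ‖v‖ * ‖N‖ := by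
    rw [hN, mul_one]
    exact hinner_le.antisymm (hv.trans hr)
  simpa only [hN, hnorm, one_smul] using inner_eq_norm_mul_iff_real.1 hinner

theorem eq_add_smul_of_inner_le_on_closedBall (hN : ‖N‖ = 1) (hx : x ∈ closedBall z r)
    (hmax : ∀ w ∈ closedBall z r, ⟪w, N⟫_ℝ ≤ ⟪x, N⟫_ℝ) : x = z + r • N := by
  obtain ⟨w, hw, hw_inner⟩ := (isGreatest_inner_closedBall (dist_nonneg.trans hx) z N).1
  have hr : r ≤ ⟪x - z, N⟫_ℝ := by
    rw [hN, mul_one] at hw_inner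
    rw [inner_sub_left]
    linarith [hmax w hw]
  exact sub_eq_iff_eq_add'.1 (eq_smul_of_norm_le_of_le_inner_s8 hN (mem_closedBall_iff_norm.1 hx) hr)

theorem statement8_general (hball : closedBall z r ⊆ K) (hx : x ∈ closedBall z r) (hN : ‖N‖ = 1)
    (hnormal : ∀ w ∈ K, ⟪w, N⟫_ℝ ≤ ⟪x, N⟫_ℝ) (hε : 0 < ε) (hy : y = x + ε • N)
    (hbdd : BddAbove ((fun w ↦ ⟪w, u⟫_ℝ) '' K))
    (hlt : supportFunction K u < supportFunction (convexHull ℝ (K ∪ {y})) u) :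
    r / (r + ε) * ‖u‖ < ⟪u, N⟫_ℝ := by
  have hr : 0 ≤ r := dist_nonneg.trans hx
  have hxz : x = z + r • N :=
    eq_add_smul_of_inner_le_on_closedBall hN hx fun w hw ↦ hnormal w (hball hw)
  have hyz : y - z = (r + ε) • N := by
    rw [hy, hxz, add_smul]
    abel
  rw [union_singleton] at hlt
  have hcap := mul_norm_lt_inner_sub_of_closedBall_subset hr hball hbdd hlt
  rw [hyz, real_inner_smul_left, real_inner_comm] at hcap
  rwa [div_mul_eq_mul_div, div_lt_iff₀' (add_pos_of_nonneg_of_pos hr hε)]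

end OuterNormal

theorem statement8 {d : ℕ} (hd : 2 ≤ d) (K : Set (EuclideanSpace ℝ (Fin d)))
    (hKcomp : IsCompact K) (hKconv : Convex ℝ K) (hKint : (interior K).Nonempty)
    (z : EuclideanSpace ℝ (Fin d)) (r : ℝ) (hr : 0 < r)
    (hball : closedBall z r ⊆ K)
    (x : EuclideanSpace ℝ (Fin d)) (hxball : x ∈ closedBall z r) (hxbd : x ∈ frontier K)
    (N : EuclideanSpace ℝ (Fin d)) (hN : ‖N‖ = 1)
    (hnormal : ∀ w ∈ K, ⟪w, N⟫_ℝ ≤ ⟪x, N⟫_ℝ)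
    (ε : ℝ) (hε : 0 < ε)
    (y : EuclideanSpace ℝ (Fin d)) (hy : y = x + ε • N) :
    ∀ u : EuclideanSpace ℝ (Fin d), ‖u‖ = 1 →
      suppFn K u < suppFn (convexHull ℝ (K ∪ {y})) u →
      r / (r + ε) ≤ ⟪u, N⟫_ℝ := by
  intro u hu hlt
  have h := statement8_general hball hxball hN hnormal hε hy
    (hKcomp.image (by fun_prop)).bddAbove hlt
  simpa only [hu, mul_one] using h.le
end

section
/- Let d ≥ 2, let K be a convex body in ℝ^d, and let N be a closed subset of the unit sphere S^{d-1}. Suppose that for every ε > 0 there exist finitely many unit vectors u_1, …, u_m ∈ N and real numbers t_1, …, t_m with h(K, u_i) ≤ t_i for all i (so each closed halfspace {x : ⟨x, u_i⟩ ≤ t_i} contains K) such that ⋂_{i=1}^m {x ∈ ℝ^d : ⟨x, u_i⟩ ≤ t_i} ⊆ {x ∈ ℝ^d : dist(x, K) ≤ ε}. Then for every boundary point x of K at which K has a unique outer unit normal vector u (i.e. u is the unique unit vector with ⟨z, u⟩ ≤ ⟨x, u⟩ for all z ∈ K), one has u ∈ N. -/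
open Metric Set
open scoped InnerProductSpace

/-!
A point outside `K` lies outside some approximating intersection of halfspaces, hence is separated
from `K` by a hyperplane with normal in `N`. Since `N` is compact, the points admitting such a
separating normal form a closed set, which therefore contains every boundary point of `K`. At a
regular point the normal found in `N` can only be the given one.
-/

theorem inner_le_suppFn {d : ℕ} {K : Set (EuclideanSpace ℝ (Fin d))} (hK : IsCompact K)
    {z : EuclideanSpace ℝ (Fin d)} (hz : z ∈ K) (v : EuclideanSpace ℝ (Fin d)) :
    ⟪z, v⟫_ℝ ≤ suppFn K v :=
  le_csSup (hK.image (by fun_prop)).bddAbove (mem_image_of_mem _ hz)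

section NormalCone

variable {E : Type*} [NormedAddCommGroup E] [InnerProductSpace ℝ E] {K N : Set E}

/-- The cone of outer normal vectors of `K` at `x`, with `0` included. The point `x` need not lie in
`K`: for `x ∉ K` the nonzero elements are the normals of the hyperplanes through `x` that have `K`
on one side. -/
def outerNormalCone (K : Set E) (x : E) : Set E :=
  {v | ∀ z ∈ K, ⟪z, v⟫_ℝ ≤ ⟪x, v⟫_ℝ}

theorem isClosed_setOf_mem_outerNormalCone (K : Set E) :
    IsClosed {p : E × E | p.2 ∈ outerNormalCone K p.1} := by
  have heq : {p : E × E | p.2 ∈ outerNormalCone K p.1} =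
      ⋂ z ∈ K, {p : E × E | ⟪z, p.2⟫_ℝ ≤ ⟪p.1, p.2⟫_ℝ} := by
    ext p
    simp only [outerNormalCone, mem_ofPred_eq, mem_iInter]
  rw [heq]
  exact isClosed_biInter fun z _ => isClosed_le (by fun_prop) (by fun_prop)

theorem isClosed_setOf_inter_outerNormalCone_nonempty (hN : IsCompact N) (K : Set E) :
    IsClosed {y | (N ∩ outerNormalCone K y).Nonempty} := by
  have : CompactSpace N := isCompact_iff_compactSpace.1 hN
  have hclosed : IsClosed {p : E × N | (p.2 : E) ∈ outerNormalCone K p.1} :=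
    (isClosed_setOf_mem_outerNormalCone K).preimage
      (continuous_fst.prodMk (continuous_subtype_val.comp continuous_snd))
  have himage : Prod.fst '' {p : E × N | (p.2 : E) ∈ outerNormalCone K p.1} =
      {y | (N ∩ outerNormalCone K y).Nonempty} := by
    ext y
    constructor
    · rintro ⟨⟨y, v⟩, hv, rfl⟩
      exact ⟨v, v.2, hv⟩
    · rintro ⟨v, hvN, hv⟩
      exact ⟨(y, ⟨v, hvN⟩), hv, rfl⟩
  exact himage ▸ isClosedMap_fst_of_compactSpace _ hclosed

theorem exists_mem_outerNormalCone_of_iInter_subset {ι : Sort*} {u : ι → E} {t : ι → ℝ}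
    {ε : ℝ} {y : E} (hK : ∀ i, ∀ z ∈ K, ⟪z, u i⟫_ℝ ≤ t i)
    (hsub : (⋂ i, {x | ⟪x, u i⟫_ℝ ≤ t i}) ⊆ {x | infDist x K ≤ ε}) (hy : ε < infDist y K) :
    ∃ i, u i ∈ outerNormalCone K y := by
  have hy_notMem : y ∉ ⋂ i, {x | ⟪x, u i⟫_ℝ ≤ t i} := fun hmem => hy.not_ge (hsub hmem)
  simp only [mem_iInter, mem_ofPred_eq, not_forall, not_le] at hy_notMem
  obtain ⟨i, hi⟩ := hy_notMem
  exact ⟨i, fun z hz => (hK i z hz).trans hi.le⟩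

theorem statement13_general (hK : IsClosed K) (hN : IsCompact N)
    (happrox : ∀ ε : ℝ, 0 < ε → ∃ (ι : Type*) (u : ι → E) (t : ι → ℝ),
      (∀ i, u i ∈ N) ∧ (∀ i, ∀ z ∈ K, ⟪z, u i⟫_ℝ ≤ t i) ∧
      (⋂ i, {x | ⟪x, u i⟫_ℝ ≤ t i}) ⊆ {x | infDist x K ≤ ε})
    {x : E} (hx : x ∈ frontier K) : (N ∩ outerNormalCone K x).Nonempty := by
  have hne : K.Nonempty := ⟨x, hK.frontier_subset hx⟩
  have hsep : Kᶜ ⊆ {y | (N ∩ outerNormalCone K y).Nonempty} := by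
    intro y hy
    have hpos : 0 < infDist y K := (hK.notMem_iff_infDist_pos hne).1 hy
    obtain ⟨ι, u, t, huN, hut, hsub⟩ := happrox (infDist y K / 2) (half_pos hpos)
    obtain ⟨i, hi⟩ := exists_mem_outerNormalCone_of_iInter_subset hut hsub (half_lt_self hpos)
    exact ⟨u i, huN i, hi⟩
  have hx_compl : x ∈ closure Kᶜ := (frontier_eq_closure_inter_closure.subset hx).2
  exact closure_minimal hsep (isClosed_setOf_inter_outerNormalCone_nonempty hN K) hx_compl

end NormalCone

theorem statement13 {d : ℕ} (hd : 2 ≤ d) (K : Set (EuclideanSpace ℝ (Fin d)))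
    (hKcomp : IsCompact K) (hKconv : Convex ℝ K) (hKint : (interior K).Nonempty)
    (N : Set (EuclideanSpace ℝ (Fin d))) (hNclosed : IsClosed N)
    (hNsub : N ⊆ sphere (0 : EuclideanSpace ℝ (Fin d)) 1)
    (happrox : ∀ ε : ℝ, 0 < ε → ∃ (m : ℕ) (u : Fin m → EuclideanSpace ℝ (Fin d)) (t : Fin m → ℝ),
      (∀ i, ‖u i‖ = 1) ∧ (∀ i, u i ∈ N) ∧ (∀ i, suppFn K (u i) ≤ t i) ∧
      (⋂ i, {x : EuclideanSpace ℝ (Fin d) | ⟪x, u i⟫_ℝ ≤ t i}) ⊆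
        {x : EuclideanSpace ℝ (Fin d) | infDist x K ≤ ε}) :
    ∀ x ∈ frontier K, ∀ u : EuclideanSpace ℝ (Fin d), ‖u‖ = 1 →
      (∀ z ∈ K, ⟪z, u⟫_ℝ ≤ ⟪x, u⟫_ℝ) →
      (∀ u' : EuclideanSpace ℝ (Fin d), ‖u'‖ = 1 →
        (∀ z ∈ K, ⟪z, u'⟫_ℝ ≤ ⟪x, u'⟫_ℝ) → u' = u) →
      u ∈ N := by
  intro x hx u _ _ huniq
  have hNcomp : IsCompact N := (isCompact_sphere 0 1).of_isClosed_subset hNclosed hNsub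
  obtain ⟨v, hvN, hv⟩ : (N ∩ outerNormalCone K x).Nonempty := by
    refine statement13_general hKcomp.isClosed hNcomp (fun ε hε => ?_) hx
    obtain ⟨m, w, t, -, hwN, hwt, hsub⟩ := happrox ε hε
    exact ⟨Fin m, w, t, hwN, fun i z hz => (inner_le_suppFn hKcomp hz _).trans (hwt i), hsub⟩
  exact huniq v (mem_sphere_zero_iff_norm.1 (hNsub hvN)) hv ▸ hvN
end
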